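/- arXiv:1611.06112 — 3 statements merged into one kernel-verified Lean document; each statement's English description precedes it below -/
import Mathlib

section
/- For every ξ ∈ ℝ³ and λ ∈ ℂ, the characteristic polynomial of the matrix B̂(ξ) satisfies det(B̂(ξ) − λ I₄) = λ⁴ + (1 + γ̄²|ξ|²) λ² + γ̄² ξ₃². -/
/- Common setup: the space ℝ³ (as a Euclidean space), Fourier transform,
   partial derivatives, Sobolev-type norms. -/

noncomputable section

open MeasureTheory Real Complex Filter ENNReal

/-- The space `ℝ³`. -/
abbrev E3 : Type := EuclideanSpace ℝ (Fin 3)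

/-- Fourier transform on `ℝ³`. -/
def FT (f : E3 → ℂ) : E3 → ℂ := FourierTransform.fourier f

/-- Inverse Fourier transform on `ℝ³`. -/
def FTinv (f : E3 → ℂ) : E3 → ℂ := FourierTransformInv.fourierInv f

/-- The point `(x₁, x₂, x₃) ∈ ℝ³`. -/
def pt (x1 x2 x3 : ℝ) : E3 := (EuclideanSpace.equiv (Fin 3) ℝ).symm ![x1, x2, x3]

/-- Fourier transform of a real-valued function. -/
def FTr (f : E3 → ℝ) : E3 → ℂ := FT (fun x => (f x : ℂ))

/-- Partial derivative `∂ᵢ` of a real-valued function. -/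
def pd (i : Fin 3) (f : E3 → ℝ) (x : E3) : ℝ := fderiv ℝ f x (EuclideanSpace.single i 1)

/-- Partial derivative `∂ᵢ` of a complex-valued function. -/
def pdC (i : Fin 3) (f : E3 → ℂ) (x : E3) : ℂ := fderiv ℝ f x (EuclideanSpace.single i 1)

/-- The Fourier symbol `B̂(ξ)` of the penalized operator. -/
def Bhat (γ : ℝ) (ξ : E3) : Matrix (Fin 4) (Fin 4) ℂ :=
  !![0, 1, 0, -(Complex.I * ((γ * ξ 0 : ℝ) : ℂ));
     -1, 0, 0, -(Complex.I * ((γ * ξ 1 : ℝ) : ℂ));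
     0, 0, 0, -(Complex.I * ((γ * ξ 2 : ℝ) : ℂ));
     -(Complex.I * ((γ * ξ 0 : ℝ) : ℂ)), -(Complex.I * ((γ * ξ 1 : ℝ) : ℂ)),
       -(Complex.I * ((γ * ξ 2 : ℝ) : ℂ)), 0]

/-! `B̂(ξ)` is the matrix `K` of `w ↦ a ⨯₃ w` for `a = -e₃`, bordered on both sides by the vector
`b = -iγ̄ξ`. Eliminating the border of a matrix with corner `d` gives the determinant
`det A * d - v ⬝ᵥ adj A *ᵥ u`, and here `adj (K - t) = t² + t K + a aᵀ`. The term `t K` does not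
contribute because `b ⬝ᵥ a ⨯₃ b = 0`, which leaves `t⁴ + (a ⬝ᵥ a - b ⬝ᵥ b) t² - (b ⬝ᵥ a)²`. -/

section BorderedDeterminant

open Matrix Polynomial

variable {n ι R : Type*} [Fintype n] [DecidableEq n] [Fintype ι] [DecidableEq ι]
  [Unique ι] [CommRing R]

theorem det_fromBlocks_replicateCol_replicateRow_of_isRegular {A : Matrix n n R}
    (hA : IsRegular A.det) (u v : n → R) (D : Matrix ι ι R) :
    (fromBlocks A (replicateCol ι u) (replicateRow ι v) D).det =
      A.det * D.det - v ⬝ᵥ A.adjugate *ᵥ u := by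
  have elimination : fromBlocks A (replicateCol ι u) (replicateRow ι v) D *
      fromBlocks 1 (-replicateCol ι (A.adjugate *ᵥ u)) 0 (A.det • 1) =
      fromBlocks A 0 (replicateRow ι v)
        (A.det • D - replicateRow ι v * replicateCol ι (A.adjugate *ᵥ u)) := by
    have cancel : A * replicateCol ι (A.adjugate *ᵥ u) = A.det • replicateCol ι u := by
      rw [← replicateCol_mulVec, mulVec_mulVec, mul_adjugate, smul_mulVec, one_mulVec,
        replicateCol_smul]
    simp [fromBlocks_multiply, cancel, sub_eq_neg_add]
  have det_elimination := congrArg det elimination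
  rw [det_mul, det_fromBlocks_zero₂₁, det_fromBlocks_zero₁₂] at det_elimination
  refine hA.right ?_
  simpa [mul_comm] using det_elimination

theorem det_fromBlocks_replicateCol_replicateRow (A : Matrix n n R) (u v : n → R)
    (D : Matrix ι ι R) :
    (fromBlocks A (replicateCol ι u) (replicateRow ι v) D).det =
      A.det * D.det - v ⬝ᵥ A.adjugate *ᵥ u := by
  -- `A + X` has a monic, hence regular, determinant over `R[X]`; setting `X = 0` recovers `A`.
  let A' : Matrix n n R[X] := A.map C + (X : R[X]) • 1
  have regular : IsRegular A'.det := by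
    refine Monic.isRegular ?_
    rw [Monic.def, ← leadingCoeff_det_X_one_add_C A, add_comm]
  let ε : R[X] →+* R := evalRingHom 0
  have eval_A' : A'.map ε = A := by
    ext i j
    simp [A', ε]
  have eval_C (w : n → R) : ε ∘ C ∘ w = w := by
    ext i
    simp [ε]
  have eval_D : (D.map C).map ε = D := by
    ext i j
    simp [ε]
  have eval_bordered : (fromBlocks A' (replicateCol ι (C ∘ u)) (replicateRow ι (C ∘ v))
      (D.map C)).map ε = fromBlocks A (replicateCol ι u) (replicateRow ι v) D := by
    rw [fromBlocks_map, eval_A', eval_D]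
    congr 1 <;> ext <;> simp [ε]
  have eval_adjugate_mulVec : ε ∘ (A'.adjugate *ᵥ C ∘ u) = A.adjugate *ᵥ u := by
    ext i
    rw [Function.comp_apply, RingHom.map_mulVec, ← RingHom.mapMatrix_apply, RingHom.map_adjugate,
      RingHom.mapMatrix_apply, eval_A', eval_C]
  have key := congrArg ε <| det_fromBlocks_replicateCol_replicateRow_of_isRegular
    regular (C ∘ u) (C ∘ v) (D.map C)
  simpa only [map_sub, map_mul, RingHom.map_det, RingHom.mapMatrix_apply, RingHom.map_dotProduct,
    eval_bordered, eval_A', eval_C, eval_D, eval_adjugate_mulVec] using key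

end BorderedDeterminant

section CrossMatrix

open Matrix

variable {R : Type*} [CommRing R]

/-- The skew-symmetric matrix of the linear map `w ↦ a ⨯₃ w`. -/
def crossMatrix (a : Fin 3 → R) : Matrix (Fin 3) (Fin 3) R :=
  !![0, -a 2, a 1; a 2, 0, -a 0; -a 1, a 0, 0]

theorem crossMatrix_mulVec (a w : Fin 3 → R) : crossMatrix a *ᵥ w = a ⨯₃ w := by
  ext i
  fin_cases i <;> simp [crossMatrix, cross_apply, mulVec, dotProduct, Fin.sum_univ_three] <;> ring

theorem crossMatrix_sub_smul_one (a : Fin 3 → R) (t : R) :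
    crossMatrix a - t • 1 = !![-t, -a 2, a 1; a 2, -t, -a 0; -a 1, a 0, -t] := by
  ext i j
  fin_cases i <;> fin_cases j <;> simp [crossMatrix]

theorem det_crossMatrix_sub_smul_one (a : Fin 3 → R) (t : R) :
    (crossMatrix a - t • 1).det = -(t * (t ^ 2 + a ⬝ᵥ a)) := by
  rw [crossMatrix_sub_smul_one, det_fin_three, vec3_dotProduct]
  simp only [of_apply, cons_val]
  ring

theorem adjugate_crossMatrix_sub_smul_one (a : Fin 3 → R) (t : R) :
    (crossMatrix a - t • 1).adjugate = t ^ 2 • 1 + t • crossMatrix a + vecMulVec a a := by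
  rw [crossMatrix_sub_smul_one, adjugate_fin_three_of]
  ext i j
  fin_cases i <;> fin_cases j <;> simp [crossMatrix, vecMulVec_apply] <;> ring

theorem dotProduct_adjugate_crossMatrix_sub_smul_one_mulVec (a u v : Fin 3 → R) (t : R) :
    v ⬝ᵥ (crossMatrix a - t • 1).adjugate *ᵥ u =
      t ^ 2 * v ⬝ᵥ u + t * v ⬝ᵥ a ⨯₃ u + v ⬝ᵥ a * a ⬝ᵥ u := by
  simp [adjugate_crossMatrix_sub_smul_one, add_mulVec, crossMatrix_mulVec, smul_mulVec,
    vecMulVec_mulVec, mul_comm]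

theorem det_bordered_crossMatrix_sub_smul_one {ι : Type*} [Fintype ι] [DecidableEq ι] [Unique ι]
    (a u v : Fin 3 → R) (t : R) :
    (fromBlocks (crossMatrix a) (replicateCol ι u) (replicateRow ι v) 0 - t • 1).det =
      t ^ 4 + (a ⬝ᵥ a - v ⬝ᵥ u) * t ^ 2 - t * v ⬝ᵥ a ⨯₃ u - v ⬝ᵥ a * a ⬝ᵥ u := by
  have blocks : fromBlocks (crossMatrix a) (replicateCol ι u) (replicateRow ι v) 0 - t • 1 =
      fromBlocks (crossMatrix a - t • 1) (replicateCol ι u) (replicateRow ι v) (-t • 1) := by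
    rw [← fromBlocks_one, fromBlocks_smul, sub_eq_add_neg, fromBlocks_neg, fromBlocks_add]
    simp [sub_eq_add_neg]
  rw [blocks, det_fromBlocks_replicateCol_replicateRow, det_crossMatrix_sub_smul_one,
    dotProduct_adjugate_crossMatrix_sub_smul_one_mulVec, det_unique]
  simp only [Matrix.smul_apply, one_apply_eq, smul_eq_mul, mul_one]
  ring

end CrossMatrix

section Symbol

open Matrix

/-- The vector `-iγ̄ξ` bordering `B̂(ξ)` in both its last row and its last column. -/
def borderVec (γ : ℝ) (ξ : E3) : Fin 3 → ℂ := fun i => -(Complex.I * ((γ * ξ i : ℝ) : ℂ))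

theorem borderVec_dotProduct_self (γ : ℝ) (ξ : E3) :
    borderVec γ ξ ⬝ᵥ borderVec γ ξ = -((γ : ℂ) ^ 2 * ((‖ξ‖ ^ 2 : ℝ) : ℂ)) := by
  rw [EuclideanSpace.real_norm_sq_eq, Fin.sum_univ_three, vec3_dotProduct]
  simp only [borderVec]
  push_cast
  linear_combination
    (γ : ℂ) ^ 2 * ((ξ 0 : ℂ) ^ 2 + (ξ 1 : ℂ) ^ 2 + (ξ 2 : ℂ) ^ 2) * Complex.I_sq

theorem Bhat_submatrix_finSumFinEquiv (γ : ℝ) (ξ : E3) :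
    (Bhat γ ξ).submatrix finSumFinEquiv finSumFinEquiv =
      fromBlocks (crossMatrix ![0, 0, -1]) (replicateCol (Fin 1) (borderVec γ ξ))
        (replicateRow (Fin 1) (borderVec γ ξ)) 0 := by
  ext (i | i) (j | j) <;> fin_cases i <;> fin_cases j <;>
    simp [Bhat, crossMatrix, borderVec, finSumFinEquiv, Fin.castAdd, Fin.natAdd]

theorem det_Bhat_sub_smul_one (γ : ℝ) (ξ : E3) (t : ℂ) :
    (Bhat γ ξ - t • 1).det =
      (fromBlocks (crossMatrix ![0, 0, -1]) (replicateCol (Fin 1) (borderVec γ ξ))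
        (replicateRow (Fin 1) (borderVec γ ξ)) 0 - t • 1).det := by
  rw [← Bhat_submatrix_finSumFinEquiv, ← submatrix_one_equiv finSumFinEquiv]
  exact (det_submatrix_equiv_self (finSumFinEquiv (m := 3) (n := 1)) (Bhat γ ξ - t • 1)).symm

theorem axis_dotProduct_borderVec (γ : ℝ) (ξ : E3) :
    ![0, 0, -1] ⬝ᵥ borderVec γ ξ = Complex.I * (γ * ξ 2) := by
  rw [vec3_dotProduct]
  simp [borderVec]

end Symbol

/-- For every `ξ ∈ ℝ³` and `λ ∈ ℂ`, the characteristic polynomial of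
`B̂(ξ)` satisfies `det(B̂(ξ) − λ I₄) = λ⁴ + (1 + γ̄²|ξ|²) λ² + γ̄² ξ₃²`. -/
theorem charpoly_Bhat (γ : ℝ) (hγ : 0 < γ) (ξ : E3) (lam : ℂ) :
    Matrix.det (Bhat γ ξ - lam • (1 : Matrix (Fin 4) (Fin 4) ℂ)) =
      lam ^ 4 + (1 + ((γ : ℂ)) ^ 2 * ((‖ξ‖ ^ 2 : ℝ) : ℂ)) * lam ^ 2 +
        ((γ : ℂ)) ^ 2 * ((ξ 2 : ℝ) : ℂ) ^ 2 := by
  have axis_sq : ![0, 0, -1] ⬝ᵥ ![0, 0, -1] = (1 : ℂ) := by simp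
  rw [det_Bhat_sub_smul_one, det_bordered_crossMatrix_sub_smul_one, dot_cross_self, axis_sq,
    dotProduct_comm (borderVec γ ξ) ![0, 0, -1], axis_dotProduct_borderVec,
    borderVec_dotProduct_self]
  linear_combination (-(γ : ℂ) ^ 2 * (ξ 2 : ℂ) ^ 2) * Complex.I_sq
end
end

section
/- For every ξ ∈ ℝ³ and every ε₁, ε₂ ∈ {−1, 1}, the complex number λ_{ε₁,ε₂}(ξ) = ε₁ (i/2)(√(1 + γ̄²|ξ|² + 2γ̄ξ₃) + ε₂ √(1 + γ̄²|ξ|² − 2γ̄ξ₃)) is an eigenvalue of the matrix B̂(ξ). Moreover, if ξ₃ ≠ 0 and ξ_h = (ξ₁,ξ₂) ≠ 0, then the four numbers λ_{ε₁,ε₂}(ξ), (ε₁, ε₂) ∈ {−1,1}², are pairwise distinct, so B̂(ξ) has four distinct eigenvalues. -/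
/- Common setup: the space ℝ³ (as a Euclidean space), Fourier transform,
   partial derivatives, Sobolev-type norms. -/

noncomputable section

open MeasureTheory Real Complex Filter ENNReal

/-- The eigenvalues `λ_{ε₁,ε₂}(ξ)` of `B̂(ξ)`. -/
def lamEV (γ ε1 ε2 : ℝ) (ξ : E3) : ℂ :=
  (ε1 : ℂ) * (Complex.I / 2) *
    (((Real.sqrt (1 + γ ^ 2 * ‖ξ‖ ^ 2 + 2 * γ * ξ 2) +
      ε2 * Real.sqrt (1 + γ ^ 2 * ‖ξ‖ ^ 2 - 2 * γ * ξ 2)) : ℝ) : ℂ)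

/-!
Since `1 + γ²|ξ|² ± 2γξ₃ = |e₃ ± γξ|²`, we have `λ_{ε₁,ε₂} = ε₁ (a + ε₂ b)` with
`a = (i/2)|e₃ + γξ|` and `b = (i/2)|e₃ - γξ|`. For signs `ε₁, ε₂` the square of such a number is
`a² + b² + 2ε₂ab`, so all four are roots of `X⁴ - 2(a² + b²)X² + (a² - b²)²`. As
`a² + b² = -(1 + γ²|ξ|²)/2` and `a² - b² = -γξ₃`, this polynomial is the characteristic polynomial
of `B̂(ξ)`. The squares determine `ε₂` when `ab ≠ 0`, and then `a² ≠ b²` gives `a + ε₂b ≠ 0`,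
which determines `ε₁`.
-/

open Matrix Polynomial

section SignCombinations

variable {R : Type*} [CommRing R] {ε₁ ε₂ : R}

theorem sq_sign_mul_add (a b : R) (hε₁ : ε₁ ^ 2 = 1) (hε₂ : ε₂ ^ 2 = 1) :
    (ε₁ * (a + ε₂ * b)) ^ 2 = a ^ 2 + b ^ 2 + 2 * (a * b) * ε₂ := by
  linear_combination (a + ε₂ * b) ^ 2 * hε₁ + b ^ 2 * hε₂

theorem biquadratic_sign_mul_add_eq_zero (a b : R) (hε₁ : ε₁ ^ 2 = 1) (hε₂ : ε₂ ^ 2 = 1) :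
    (ε₁ * (a + ε₂ * b)) ^ 4 - 2 * (a ^ 2 + b ^ 2) * (ε₁ * (a + ε₂ * b)) ^ 2 +
      (a ^ 2 - b ^ 2) ^ 2 = 0 := by
  have h_sq := sq_sign_mul_add a b hε₁ hε₂
  generalize ε₁ * (a + ε₂ * b) = x at h_sq ⊢
  calc
    x ^ 4 - 2 * (a ^ 2 + b ^ 2) * x ^ 2 + (a ^ 2 - b ^ 2) ^ 2
    _ = (x ^ 2 - (a ^ 2 + b ^ 2)) ^ 2 - 4 * (a * b) ^ 2 := by ring
    _ = 4 * (a * b) ^ 2 * (ε₂ ^ 2 - 1) := by rw [h_sq]; ring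
    _ = 0 := by rw [hε₂, sub_self, mul_zero]

theorem eq_and_eq_of_sign_mul_add_eq [NoZeroDivisors R] [NeZero (2 : R)] {a b δ₁ δ₂ : R}
    (ha : a ≠ 0) (hb : b ≠ 0) (hab : a ^ 2 ≠ b ^ 2) (hε₁ : ε₁ ^ 2 = 1) (hε₂ : ε₂ ^ 2 = 1)
    (hδ₁ : δ₁ ^ 2 = 1) (hδ₂ : δ₂ ^ 2 = 1) (h : ε₁ * (a + ε₂ * b) = δ₁ * (a + δ₂ * b)) :
    ε₁ = δ₁ ∧ ε₂ = δ₂ := by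
  have h_sq : a ^ 2 + b ^ 2 + 2 * (a * b) * ε₂ = a ^ 2 + b ^ 2 + 2 * (a * b) * δ₂ := by
    rw [← sq_sign_mul_add a b hε₁ hε₂, h, sq_sign_mul_add a b hδ₁ hδ₂]
  obtain rfl : ε₂ = δ₂ :=
    mul_left_cancel₀ (mul_ne_zero two_ne_zero (mul_ne_zero ha hb)) (add_left_cancel h_sq)
  have h_ne : a + ε₂ * b ≠ 0 := fun h_zero ↦
    hab (by linear_combination (a - ε₂ * b) * h_zero + b ^ 2 * hε₂)
  exact ⟨mul_right_cancel₀ h_ne h, rfl⟩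

end SignCombinations

theorem exists_mulVec_eq_smul_of_isRoot_charpoly {n K : Type*} [Fintype n] [DecidableEq n]
    [Field K] {M : Matrix n n K} {μ : K} (h : M.charpoly.IsRoot μ) :
    ∃ v : n → K, v ≠ 0 ∧ M *ᵥ v = μ • v := by
  rw [← Matrix.charpoly_toLin', ← Module.End.hasEigenvalue_iff_isRoot_charpoly] at h
  obtain ⟨v, hv⟩ := h.exists_hasEigenvector
  exact ⟨v, hv.2, hv.apply_eq_smul⟩

theorem det_rotation_gradient {R : Type*} [CommRing R] (x p q r : R) :
    !![x, -1, 0, p; 1, x, 0, q; 0, 0, x, r; p, q, r, x].det =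
      x ^ 4 + (1 - (p ^ 2 + q ^ 2 + r ^ 2)) * x ^ 2 - r ^ 2 := by
  have h_first_row : !![x, -1, 0, p; 1, x, 0, q; 0, 0, x, r; p, q, r, x].det =
      x * !![x, 0, q; 0, x, r; q, r, x].det + !![1, 0, q; 0, x, r; p, r, x].det -
        p * !![1, x, 0; 0, 0, x; p, q, r].det := by
    simp [det_succ_row_zero (n := 3), Fin.sum_univ_four, det_fin_three, Fin.succAbove,
      sub_eq_add_neg, add_assoc, Odd.neg_one_pow (n := 3) (by decide)]
  rw [h_first_row]
  simp only [det_fin_three, of_apply, cons_val]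
  ring

theorem charpoly_rotation_gradient {R : Type*} [CommRing R] (p q r : R) :
    (!![0, 1, 0, -p; -1, 0, 0, -q; 0, 0, 0, -r; -p, -q, -r, 0]).charpoly =
      X ^ 4 + C (1 - (p ^ 2 + q ^ 2 + r ^ 2)) * X ^ 2 - C (r ^ 2) := by
  have h_charmatrix : (!![0, 1, 0, -p; -1, 0, 0, -q; 0, 0, 0, -r; -p, -q, -r, 0]).charmatrix =
      !![X, -1, 0, C p; 1, X, 0, C q; 0, 0, X, C r; C p, C q, C r, X] := by
    ext1 i j
    fin_cases i <;> fin_cases j <;> simp [charmatrix]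
  rw [Matrix.charpoly, h_charmatrix, det_rotation_gradient]
  simp only [map_sub, map_add, map_pow, map_one]

theorem norm_add_smul_sq_of_norm_eq_one {E : Type*} [NormedAddCommGroup E] [InnerProductSpace ℝ E]
    {e : E} (he : ‖e‖ = 1) (c : ℝ) (x : E) :
    ‖e + c • x‖ ^ 2 = 1 + c ^ 2 * ‖x‖ ^ 2 + 2 * c * inner ℝ e x := by
  rw [norm_add_sq_real, he, real_inner_smul_right, norm_smul, mul_pow, Real.norm_eq_abs, sq_abs]
  ring

/-- The vertical unit vector of `ℝ³`. -/
def e₃ : E3 := EuclideanSpace.single 2 1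

theorem norm_e₃_add_smul_sq (c : ℝ) (ξ : E3) :
    ‖e₃ + c • ξ‖ ^ 2 = 1 + c ^ 2 * ‖ξ‖ ^ 2 + 2 * c * ξ 2 := by
  have h_norm : ‖e₃‖ = 1 := by simp [e₃]
  have h_inner : inner ℝ e₃ ξ = ξ 2 := by simp [e₃, EuclideanSpace.inner_single_left]
  rw [norm_add_smul_sq_of_norm_eq_one h_norm, h_inner]

theorem e₃_add_smul_ne_zero {c : ℝ} (hc : c ≠ 0) {ξ : E3} (hξ : ¬(ξ 0 = 0 ∧ ξ 1 = 0)) :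
    e₃ + c • ξ ≠ 0 := by
  intro h
  have h_coord (i : Fin 3) : (e₃ + c • ξ) i = 0 := by rw [h]; rfl
  exact hξ ⟨by simpa [e₃, hc] using h_coord 0, by simpa [e₃, hc] using h_coord 1⟩

/-- The imaginary number `(i/2)|e₃ + cξ|`: the eigenvalues of `B̂(ξ)` are the combinations
`ε₁ (a + ε₂ b)` of its values `a` at `c = γ` and `b` at `c = -γ`. -/
def halfFrequency (c : ℝ) (ξ : E3) : ℂ := Complex.I / 2 * (‖e₃ + c • ξ‖ : ℂ)

theorem halfFrequency_sq (c : ℝ) (ξ : E3) :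
    halfFrequency c ξ ^ 2 = -((1 + c ^ 2 * ‖ξ‖ ^ 2 + 2 * c * ξ 2 : ℝ) : ℂ) / 4 := by
  rw [halfFrequency, mul_pow, div_pow, Complex.I_sq, ← Complex.ofReal_pow, norm_e₃_add_smul_sq]
  ring

theorem halfFrequency_ne_zero {c : ℝ} (hc : c ≠ 0) {ξ : E3} (hξ : ¬(ξ 0 = 0 ∧ ξ 1 = 0)) :
    halfFrequency c ξ ≠ 0 := by
  simp [halfFrequency, e₃_add_smul_ne_zero hc hξ]

theorem halfFrequency_sq_add_sq_neg (γ : ℝ) (ξ : E3) :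
    halfFrequency γ ξ ^ 2 + halfFrequency (-γ) ξ ^ 2 = -((1 + γ ^ 2 * ‖ξ‖ ^ 2 : ℝ) : ℂ) / 2 := by
  rw [halfFrequency_sq, halfFrequency_sq]
  push_cast
  ring

theorem halfFrequency_sq_sub_sq_neg (γ : ℝ) (ξ : E3) :
    halfFrequency γ ξ ^ 2 - halfFrequency (-γ) ξ ^ 2 = -((γ * ξ 2 : ℝ) : ℂ) := by
  rw [halfFrequency_sq, halfFrequency_sq]
  push_cast
  ring

theorem lamEV_eq_sign_mul_add (γ ε₁ ε₂ : ℝ) (ξ : E3) :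
    lamEV γ ε₁ ε₂ ξ = ε₁ * (halfFrequency γ ξ + ε₂ * halfFrequency (-γ) ξ) := by
  have h_plus : √(1 + γ ^ 2 * ‖ξ‖ ^ 2 + 2 * γ * ξ 2) = ‖e₃ + γ • ξ‖ := by
    rw [← norm_e₃_add_smul_sq, Real.sqrt_sq (norm_nonneg _)]
  have h_minus : √(1 + γ ^ 2 * ‖ξ‖ ^ 2 - 2 * γ * ξ 2) = ‖e₃ + (-γ) • ξ‖ := by
    rw [← Real.sqrt_sq (norm_nonneg (e₃ + (-γ) • ξ)), norm_e₃_add_smul_sq]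
    ring_nf
  rw [lamEV, h_plus, h_minus, halfFrequency, halfFrequency]
  push_cast
  ring

theorem charpoly_Bhat_s6 (γ : ℝ) (ξ : E3) :
    (Bhat γ ξ).charpoly =
      X ^ 4 + C ((1 + γ ^ 2 * ‖ξ‖ ^ 2 : ℝ) : ℂ) * X ^ 2 + C (((γ * ξ 2) ^ 2 : ℝ) : ℂ) := by
  have h_quadratic : 1 - ((Complex.I * ((γ * ξ 0 : ℝ) : ℂ)) ^ 2 +
      (Complex.I * ((γ * ξ 1 : ℝ) : ℂ)) ^ 2 + (Complex.I * ((γ * ξ 2 : ℝ) : ℂ)) ^ 2) =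
      ((1 + γ ^ 2 * ‖ξ‖ ^ 2 : ℝ) : ℂ) := by
    simp only [mul_pow, Complex.I_sq, EuclideanSpace.real_norm_sq_eq, Fin.sum_univ_three]
    push_cast
    ring
  have h_constant : (Complex.I * ((γ * ξ 2 : ℝ) : ℂ)) ^ 2 = -(((γ * ξ 2) ^ 2 : ℝ) : ℂ) := by
    rw [mul_pow, Complex.I_sq, neg_one_mul, Complex.ofReal_pow]
  rw [Bhat, charpoly_rotation_gradient, h_quadratic, h_constant, C_neg, sub_neg_eq_add]

theorem isRoot_charpoly_Bhat_lamEV (γ : ℝ) {ε₁ ε₂ : ℝ} (hε₁ : ε₁ ^ 2 = 1) (hε₂ : ε₂ ^ 2 = 1)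
    (ξ : E3) : (Bhat γ ξ).charpoly.IsRoot (lamEV γ ε₁ ε₂ ξ) := by
  have h_biquadratic := biquadratic_sign_mul_add_eq_zero (ε₁ := (ε₁ : ℂ)) (ε₂ := (ε₂ : ℂ))
    (halfFrequency γ ξ) (halfFrequency (-γ) ξ) (mod_cast hε₁) (mod_cast hε₂)
  rw [← lamEV_eq_sign_mul_add, halfFrequency_sq_add_sq_neg, halfFrequency_sq_sub_sq_neg]
    at h_biquadratic
  simp only [charpoly_Bhat_s6, IsRoot.def, eval_add, eval_mul, eval_pow, eval_X, eval_C]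
  push_cast at h_biquadratic ⊢
  linear_combination h_biquadratic

theorem injOn_lamEV {γ : ℝ} (hγ : γ ≠ 0) {ξ : E3} (hξ₃ : ξ 2 ≠ 0)
    (hξ : ¬(ξ 0 = 0 ∧ ξ 1 = 0)) :
    Set.InjOn (fun ε : ℝ × ℝ ↦ lamEV γ ε.1 ε.2 ξ) {ε | ε.1 ^ 2 = 1 ∧ ε.2 ^ 2 = 1} := by
  rintro ⟨ε₁, ε₂⟩ ⟨hε₁, hε₂⟩ ⟨δ₁, δ₂⟩ ⟨hδ₁, hδ₂⟩ h
  simp only [lamEV_eq_sign_mul_add] at h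
  have h_sq_ne : halfFrequency γ ξ ^ 2 ≠ halfFrequency (-γ) ξ ^ 2 := by
    rw [← sub_ne_zero, halfFrequency_sq_sub_sq_neg]
    exact_mod_cast neg_ne_zero.mpr (mul_ne_zero hγ hξ₃)
  obtain ⟨h₁, h₂⟩ := eq_and_eq_of_sign_mul_add_eq (halfFrequency_ne_zero hγ hξ)
    (halfFrequency_ne_zero (neg_ne_zero.mpr hγ) hξ) h_sq_ne
    (mod_cast hε₁) (mod_cast hε₂) (mod_cast hδ₁) (mod_cast hδ₂) h
  exact Prod.ext (mod_cast h₁) (mod_cast h₂)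

/-- Each `λ_{ε₁,ε₂}(ξ)` is an eigenvalue of `B̂(ξ)`; if `ξ₃ ≠ 0` and
`ξ_h ≠ 0`, the four numbers `λ_{ε₁,ε₂}(ξ)` are pairwise distinct. -/
theorem eigenvalues_Bhat (γ : ℝ) (hγ : 0 < γ) (ξ : E3) :
    (∀ ε1 ε2 : ℝ, (ε1 = 1 ∨ ε1 = -1) → (ε2 = 1 ∨ ε2 = -1) →
      ∃ v : Fin 4 → ℂ, v ≠ 0 ∧ (Bhat γ ξ).mulVec v = lamEV γ ε1 ε2 ξ • v) ∧
    ((ξ 2 ≠ 0 ∧ ¬(ξ 0 = 0 ∧ ξ 1 = 0)) →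
      ∀ ε1 ε2 ε1' ε2' : ℝ, (ε1 = 1 ∨ ε1 = -1) → (ε2 = 1 ∨ ε2 = -1) →
        (ε1' = 1 ∨ ε1' = -1) → (ε2' = 1 ∨ ε2' = -1) → (ε1, ε2) ≠ (ε1', ε2') →
        lamEV γ ε1 ε2 ξ ≠ lamEV γ ε1' ε2' ξ) := by
  refine ⟨fun ε1 ε2 hε1 hε2 ↦ ?_, fun ⟨hξ₃, hξ⟩ ε1 ε2 ε1' ε2' hε1 hε2 hε1' hε2' h_ne h_eq ↦ ?_⟩
  · exact exists_mulVec_eq_smul_of_isRoot_charpoly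
      (isRoot_charpoly_Bhat_lamEV γ (sq_eq_one_iff.mpr hε1) (sq_eq_one_iff.mpr hε2) ξ)
  · exact h_ne (injOn_lamEV hγ.ne' hξ₃ hξ ⟨sq_eq_one_iff.mpr hε1, sq_eq_one_iff.mpr hε2⟩
      ⟨sq_eq_one_iff.mpr hε1', sq_eq_one_iff.mpr hε2'⟩ h_eq)
end
end

section
/- Let 0 < r ≤ 1 ≤ R. There exist constants C₁, C₂ > 0, depending only on γ̄, such that for each of the four phases λ = λ_{ε₁,ε₂} and every ξ ∈ C_{r/2,2R}, the derivative a_λ(ξ) = ∂_{ξ₂} λ(ξ) satisfies C₁ R^{−3} r |ξ₂| ≤ |a_λ(ξ)| ≤ C₂ r^{−1}, and moreover |∂_{ξ₂} a_λ(ξ)| ≤ C₂ r^{−1}. -/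
/- Common setup: the space ℝ³ (as a Euclidean space), Fourier transform,
   partial derivatives, Sobolev-type norms. -/

noncomputable section

open MeasureTheory Real Complex Filter ENNReal

/-- A smooth cut-off function `ψ` with values in `[0,1]`, equal to `1` on `(-∞,1]`
and to `0` on `[2,∞)`. -/
def IsCutoff (ψ : ℝ → ℝ) : Prop :=
  ContDiff ℝ (⊤ : ℕ∞) ψ ∧ (∀ x, ψ x ∈ Set.Icc (0:ℝ) 1) ∧ (∀ x ≤ (1:ℝ), ψ x = 1) ∧
    (∀ x, (2:ℝ) ≤ x → ψ x = 0)

/-- The norm `|ξ_h|` of the horizontal component of a frequency `ξ`. -/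
def xih (ξ : E3) : ℝ := Real.sqrt (ξ 0 ^ 2 + ξ 1 ^ 2)

/-- The frequency cut-off function `Ψ_{r,R}`. -/
def Psi (ψ : ℝ → ℝ) (r R : ℝ) (ξ : E3) : ℝ :=
  ψ (‖ξ‖ / R) * ((1 - ψ (xih ξ / r)) * (1 - ψ (|ξ 2| / r)))

/-- The set `C_{r,R} = {ξ : |ξ| ≤ R, |ξ_h| ≥ r, |ξ₃| ≥ r}`. -/
def CrR (r R : ℝ) : Set E3 := {ξ | ‖ξ‖ ≤ R ∧ r ≤ xih ξ ∧ r ≤ |ξ 2|}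

/-- The frequency cut-off operator `Ψ_{r,R}(D) g = 𝓕⁻¹(Ψ_{r,R} ĝ)`. -/
def PsiD (ψ : ℝ → ℝ) (r R : ℝ) (g : E3 → ℂ) : E3 → ℂ :=
  FTinv (fun ξ => (Psi ψ r R ξ : ℂ) * FT g ξ)

/-- The derivative `a_λ(ξ) = ∂_{ξ₂} λ_{ε₁,ε₂}(ξ) = ε₁ (iγ̄²ξ₂/2)(1/A(ξ) + ε₂/B(ξ))`. -/
def aLam (γ ε1 ε2 : ℝ) (ξ : E3) : ℂ :=
  (ε1 : ℂ) * (Complex.I * ((γ ^ 2 * ξ 1 : ℝ) : ℂ) / 2) *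
    (((1 / Real.sqrt (1 + γ ^ 2 * ‖ξ‖ ^ 2 + 2 * γ * ξ 2) +
      ε2 / Real.sqrt (1 + γ ^ 2 * ‖ξ‖ ^ 2 - 2 * γ * ξ 2)) : ℝ) : ℂ)

/-!
The two square roots are distances: `A ξ = ‖γ • ξ + e₃‖`, and `B` is `A` with `γ` replaced by `-γ`.
The triangle inequality bounds them above by `1 + |γ| ‖ξ‖`, and projecting to the horizontal plane
bounds them below by `|γ| |ξ_h|`. Writing `S = γ² ξ₂ / A` for `∂_{ξ₂} A`, one has `|S| ≤ |γ|`,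
and differentiating `S A = γ² ξ₂` gives `∂_{ξ₂} S = (γ² - S²) / A ∈ [0, |γ| / |ξ_h|]`; this yields
the two upper bounds. Cancellation in `1 / A ± 1 / B` is quantified by
`1 / A - 1 / B = (B² - A²) / (A B (A + B))` together with `A² - B² = 4 γ ξ₃`.
-/

lemma abs_sub_le_abs_add_mul {K : Type*} [CommRing K] [LinearOrder K] [IsStrictOrderedRing K]
    {a b ε : K} (ha : 0 ≤ a) (hb : 0 ≤ b) (hε : |ε| = 1) : |a - b| ≤ |a + ε * b| := by
  rcases (abs_eq zero_le_one).1 hε with rfl | rfl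
  · rw [one_mul, abs_of_nonneg (add_nonneg ha hb)]
    exact abs_le.2 ⟨by linarith, by linarith⟩
  · rw [neg_one_mul, sub_eq_add_neg]

lemma abs_sq_sub_sq_div_le_abs_inv_sub_inv {K : Type*} [Field K] [LinearOrder K]
    [IsStrictOrderedRing K] {a b M : K} (ha : 0 < a) (hb : 0 < b) (haM : a ≤ M) (hbM : b ≤ M) :
    |a ^ 2 - b ^ 2| / (2 * M ^ 3) ≤ |a⁻¹ - b⁻¹| := by
  have hM : 0 < M := ha.trans_le haM
  have hden : a * b * (a + b) ≤ 2 * M ^ 3 := by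
    calc a * b * (a + b) ≤ M * M * (M + M) := by gcongr
      _ = 2 * M ^ 3 := by ring
  calc |a ^ 2 - b ^ 2| / (2 * M ^ 3) ≤ |a ^ 2 - b ^ 2| / (a * b * (a + b)) := by gcongr
    _ = |(b ^ 2 - a ^ 2) / (a * b * (a + b))| := by
      rw [abs_div, abs_sub_comm, abs_of_pos (by positivity : 0 < a * b * (a + b))]
    _ = |a⁻¹ - b⁻¹| := by congr 1; field_simp; ring

/-- The square root `A(ξ) = √(1 + γ²|ξ|² + 2γξ₃)`, written as the distance `|γξ + e₃|`.
The other square root `B` is its value at `-γ`. -/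
def phaseRoot (γ : ℝ) (ξ : E3) : ℝ := ‖γ • ξ + EuclideanSpace.single 2 1‖

/-- The derivative `γ²ξ₂ / A(ξ)` of the square root `A` in the direction `ξ₂`; where `A(ξ) = 0`
it takes the value `0`. -/
def phaseSlope (γ : ℝ) (ξ : E3) : ℝ := γ ^ 2 * ξ 1 / phaseRoot γ ξ

/-- The combination `ε₁ (i/2) (a + ε₂ b)`: the phase `λ_{ε₁,ε₂}` and its derivatives all have this
form, with `b` obtained from `a` by changing the sign of `γ`. -/
def phaseSum (ε1 ε2 a b : ℝ) : ℂ := (ε1 : ℂ) * (Complex.I / 2) * ((a + ε2 * b : ℝ) : ℂ)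

lemma abs_apply_one_le_xih (ξ : E3) : |ξ 1| ≤ xih ξ :=
  Real.abs_le_sqrt (le_add_of_nonneg_left (sq_nonneg (ξ 0)))

lemma phaseRoot_sq (γ : ℝ) (ξ : E3) :
    phaseRoot γ ξ ^ 2 = 1 + γ ^ 2 * ‖ξ‖ ^ 2 + 2 * γ * ξ 2 := by
  rw [phaseRoot, norm_add_sq_real, norm_smul, mul_pow, real_inner_smul_left,
    EuclideanSpace.inner_single_right]
  simp only [Real.norm_eq_abs, sq_abs, PiLp.norm_single, norm_one, one_pow, ringHom_apply, one_mul]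
  ring

lemma phaseRoot_nonneg (γ : ℝ) (ξ : E3) : 0 ≤ phaseRoot γ ξ := norm_nonneg _

lemma sqrt_eq_phaseRoot (γ : ℝ) (ξ : E3) :
    √(1 + γ ^ 2 * ‖ξ‖ ^ 2 + 2 * γ * ξ 2) = phaseRoot γ ξ := by
  rw [← phaseRoot_sq, Real.sqrt_sq (phaseRoot_nonneg γ ξ)]

lemma sqrt_eq_phaseRoot_neg (γ : ℝ) (ξ : E3) :
    √(1 + γ ^ 2 * ‖ξ‖ ^ 2 - 2 * γ * ξ 2) = phaseRoot (-γ) ξ := by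
  rw [← sqrt_eq_phaseRoot, neg_sq, mul_neg, neg_mul, sub_eq_add_neg]

lemma phaseRoot_sq_sub_phaseRoot_neg_sq (γ : ℝ) (ξ : E3) :
    phaseRoot γ ξ ^ 2 - phaseRoot (-γ) ξ ^ 2 = 4 * γ * ξ 2 := by
  rw [phaseRoot_sq, phaseRoot_sq]
  ring

lemma phaseRoot_le (γ : ℝ) (ξ : E3) : phaseRoot γ ξ ≤ 1 + |γ| * ‖ξ‖ := by
  calc phaseRoot γ ξ ≤ ‖γ • ξ‖ + ‖(EuclideanSpace.single 2 1 : E3)‖ := norm_add_le _ _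
    _ = 1 + |γ| * ‖ξ‖ := by
      rw [norm_smul, Real.norm_eq_abs, PiLp.norm_single, norm_one, add_comm]

lemma abs_mul_xih_le_phaseRoot (γ : ℝ) (ξ : E3) : |γ| * xih ξ ≤ phaseRoot γ ξ := by
  refine abs_le_of_sq_le_sq' ?_ (phaseRoot_nonneg γ ξ) |>.2
  have hxih : xih ξ ^ 2 = ξ 0 ^ 2 + ξ 1 ^ 2 := Real.sq_sqrt (by positivity)
  calc (|γ| * xih ξ) ^ 2 = γ ^ 2 * (ξ 0 ^ 2 + ξ 1 ^ 2) := by rw [mul_pow, sq_abs, hxih]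
    _ ≤ γ ^ 2 * (ξ 0 ^ 2 + ξ 1 ^ 2) + (1 + γ * ξ 2) ^ 2 := le_add_of_nonneg_right (sq_nonneg _)
    _ = phaseRoot γ ξ ^ 2 := by
      rw [phaseRoot_sq, EuclideanSpace.real_norm_sq_eq, Fin.sum_univ_three]
      ring

lemma abs_mul_abs_apply_one_le_phaseRoot (γ : ℝ) (ξ : E3) : |γ| * |ξ 1| ≤ phaseRoot γ ξ :=
  (mul_le_mul_of_nonneg_left (abs_apply_one_le_xih ξ) (abs_nonneg γ)).trans
    (abs_mul_xih_le_phaseRoot γ ξ)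

lemma phaseRoot_pos (γ : ℝ) {ξ : E3} (hξ : 0 < xih ξ) : 0 < phaseRoot γ ξ := by
  rcases eq_or_ne γ 0 with rfl | hγ
  · simp [phaseRoot]
  · exact (mul_pos (abs_pos.2 hγ) hξ).trans_le (abs_mul_xih_le_phaseRoot γ ξ)

lemma phaseSlope_mul_phaseRoot (γ : ℝ) (ξ : E3) :
    phaseSlope γ ξ * phaseRoot γ ξ = γ ^ 2 * ξ 1 := by
  refine div_mul_cancel_of_imp fun h => ?_
  have hzero : |γ| * |ξ 1| = 0 :=
    (h ▸ abs_mul_abs_apply_one_le_phaseRoot γ ξ).antisymm (by positivity)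
  rw [← abs_mul, abs_eq_zero] at hzero
  rw [sq, mul_assoc, hzero, mul_zero]

lemma abs_phaseSlope_le (γ : ℝ) (ξ : E3) : |phaseSlope γ ξ| ≤ |γ| := by
  rw [phaseSlope, abs_div, abs_of_nonneg (phaseRoot_nonneg γ ξ)]
  refine div_le_of_le_mul₀ (phaseRoot_nonneg γ ξ) (abs_nonneg γ) ?_
  calc |γ ^ 2 * ξ 1| = |γ| * (|γ| * |ξ 1|) := by rw [abs_mul, abs_pow, sq, mul_assoc]
    _ ≤ |γ| * phaseRoot γ ξ := by gcongr; exact abs_mul_abs_apply_one_le_phaseRoot γ ξ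

lemma pd_mul {f g : E3 → ℝ} {ξ : E3} (hf : DifferentiableAt ℝ f ξ) (hg : DifferentiableAt ℝ g ξ)
    (i : Fin 3) : pd i (fun η => f η * g η) ξ = f ξ * pd i g ξ + pd i f ξ * g ξ := by
  simp only [pd]
  rw [fderiv_fun_mul hf hg]
  simp [mul_comm]

lemma differentiableAt_phaseRoot (γ : ℝ) {ξ : E3} (hξ : 0 < xih ξ) :
    DifferentiableAt ℝ (phaseRoot γ) ξ :=
  ((differentiableAt_id.const_smul γ).add_const _).norm ℝ (norm_pos_iff.1 (phaseRoot_pos γ hξ))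

lemma differentiableAt_phaseSlope (γ : ℝ) {ξ : E3} (hξ : 0 < xih ξ) :
    DifferentiableAt ℝ (phaseSlope γ) ξ := by
  refine (((PiLp.hasFDerivAt_apply (𝕜 := ℝ) 2 ξ 1).differentiableAt.const_mul (γ ^ 2)).mul
    ((differentiableAt_phaseRoot γ hξ).inv (phaseRoot_pos γ hξ).ne')).congr_of_eventuallyEq ?_
  exact .of_forall fun η => div_eq_mul_inv _ _

lemma pd_one_phaseRoot (γ : ℝ) {ξ : E3} (hξ : 0 < xih ξ) :
    pd 1 (phaseRoot γ) ξ = phaseSlope γ ξ := by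
  have hA := differentiableAt_phaseRoot γ hξ
  have hsq : pd 1 (fun η => phaseRoot γ η * phaseRoot γ η) ξ = 2 * (γ ^ 2 * ξ 1) := by
    have hderiv := (((hasStrictFDerivAt_norm_sq ξ).hasFDerivAt.const_mul (γ ^ 2)).const_add 1).add
      ((PiLp.hasFDerivAt_apply (𝕜 := ℝ) 2 ξ 2).const_mul (2 * γ))
    have hpoly : (fun η => phaseRoot γ η * phaseRoot γ η) =
        fun η : E3 => 1 + γ ^ 2 * ‖η‖ ^ 2 + 2 * γ * η 2 :=
      funext fun η => by rw [← sq, phaseRoot_sq]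
    rw [pd, hpoly]
    refine (congrArg (· (EuclideanSpace.single 1 1)) hderiv.fderiv).trans ?_
    simp only [add_apply, smul_apply, coe_innerSL_apply, EuclideanSpace.inner_single_right,
      ringHom_apply, one_mul, nsmul_eq_mul, Nat.cast_ofNat, smul_eq_mul, PiLp.proj_apply, ne_eq,
      Fin.reduceEq, not_false_eq_true, PiLp.single_eq_of_ne, mul_zero, add_zero]
    ring
  rw [pd_mul hA hA] at hsq
  rw [phaseSlope, eq_div_iff (phaseRoot_pos γ hξ).ne']
  linarith

lemma pd_one_phaseSlope (γ : ℝ) {ξ : E3} (hξ : 0 < xih ξ) :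
    pd 1 (phaseSlope γ) ξ = (γ ^ 2 - phaseSlope γ ξ ^ 2) / phaseRoot γ ξ := by
  have hprod : pd 1 (fun η => phaseSlope γ η * phaseRoot γ η) ξ = γ ^ 2 := by
    rw [pd, funext (phaseSlope_mul_phaseRoot γ),
      ((PiLp.hasFDerivAt_apply (𝕜 := ℝ) 2 ξ 1).const_mul _).fderiv]
    simp
  rw [pd_mul (differentiableAt_phaseSlope γ hξ) (differentiableAt_phaseRoot γ hξ),
    pd_one_phaseRoot γ hξ] at hprod
  rw [eq_div_iff (phaseRoot_pos γ hξ).ne']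
  linarith

lemma abs_pd_one_phaseSlope_le (γ : ℝ) {ξ : E3} (hξ : 0 < xih ξ) :
    |pd 1 (phaseSlope γ) ξ| ≤ |γ| / xih ξ := by
  have hA := phaseRoot_pos γ hξ
  have hslope : phaseSlope γ ξ ^ 2 ≤ γ ^ 2 := sq_le_sq.2 (abs_phaseSlope_le γ ξ)
  rw [pd_one_phaseSlope γ hξ, abs_div, abs_of_pos hA, abs_of_nonneg (sub_nonneg.2 hslope),
    div_le_div_iff₀ hA hξ]
  calc (γ ^ 2 - phaseSlope γ ξ ^ 2) * xih ξ ≤ γ ^ 2 * xih ξ := by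
        gcongr; exact sub_le_self _ (sq_nonneg _)
    _ = |γ| * (|γ| * xih ξ) := by rw [← sq_abs, sq, mul_assoc]
    _ ≤ |γ| * phaseRoot γ ξ := by gcongr; exact abs_mul_xih_le_phaseRoot γ ξ

lemma lamEV_eq_phaseSum (γ ε1 ε2 : ℝ) :
    lamEV γ ε1 ε2 = fun ξ => phaseSum ε1 ε2 (phaseRoot γ ξ) (phaseRoot (-γ) ξ) := by
  funext ξ
  rw [lamEV, sqrt_eq_phaseRoot, sqrt_eq_phaseRoot_neg, phaseSum]

lemma aLam_eq_phaseSum (γ ε1 ε2 : ℝ) :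
    aLam γ ε1 ε2 = fun ξ => phaseSum ε1 ε2 (phaseSlope γ ξ) (phaseSlope (-γ) ξ) := by
  funext ξ
  rw [aLam, sqrt_eq_phaseRoot, sqrt_eq_phaseRoot_neg, phaseSum, phaseSlope, phaseSlope]
  push_cast
  ring

lemma pdC_phaseSum {f g : E3 → ℝ} {ξ : E3} (hf : DifferentiableAt ℝ f ξ)
    (hg : DifferentiableAt ℝ g ξ) (ε1 ε2 : ℝ) (i : Fin 3) :
    pdC i (fun η => phaseSum ε1 ε2 (f η) (g η)) ξ = phaseSum ε1 ε2 (pd i f ξ) (pd i g ξ) := by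
  have hsum := hf.hasFDerivAt.add (hg.hasFDerivAt.const_mul ε2)
  have hphase := (Complex.ofRealCLM.hasFDerivAt.comp ξ hsum).const_mul
    ((ε1 : ℂ) * (Complex.I / 2))
  refine (congrArg (· (EuclideanSpace.single i 1)) hphase.fderiv).trans ?_
  simp [phaseSum, pd, mul_add]

lemma norm_phaseSum (ε1 ε2 a b : ℝ) : ‖phaseSum ε1 ε2 a b‖ = |ε1| / 2 * |a + ε2 * b| := by
  simp only [phaseSum, norm_mul, norm_div, Complex.norm_real, Complex.norm_I, Complex.norm_ofNat,
    Real.norm_eq_abs, mul_one_div]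

lemma norm_phaseSum_le {a b M : ℝ} (ha : |a| ≤ M) (hb : |b| ≤ M) (ε1 ε2 : ℝ) :
    ‖phaseSum ε1 ε2 a b‖ ≤ |ε1| * (1 + |ε2|) / 2 * M := by
  calc ‖phaseSum ε1 ε2 a b‖ = |ε1| / 2 * |a + ε2 * b| := norm_phaseSum ε1 ε2 a b
    _ ≤ |ε1| / 2 * (|a| + |ε2| * |b|) := by
      gcongr; exact (abs_add_le _ _).trans_eq (by rw [abs_mul])
    _ ≤ |ε1| / 2 * (M + |ε2| * M) := by gcongr
    _ = |ε1| * (1 + |ε2|) / 2 * M := by ring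

lemma pdC_one_lamEV (γ ε1 ε2 : ℝ) {ξ : E3} (hξ : 0 < xih ξ) :
    pdC 1 (lamEV γ ε1 ε2) ξ = aLam γ ε1 ε2 ξ := by
  rw [lamEV_eq_phaseSum, aLam_eq_phaseSum, pdC_phaseSum (differentiableAt_phaseRoot γ hξ)
    (differentiableAt_phaseRoot (-γ) hξ), pd_one_phaseRoot γ hξ, pd_one_phaseRoot (-γ) hξ]

lemma norm_aLam_le (γ ε1 ε2 : ℝ) (ξ : E3) :
    ‖aLam γ ε1 ε2 ξ‖ ≤ |ε1| * (1 + |ε2|) / 2 * |γ| := by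
  rw [aLam_eq_phaseSum]
  exact norm_phaseSum_le (abs_phaseSlope_le γ ξ) (abs_neg γ ▸ abs_phaseSlope_le (-γ) ξ) ε1 ε2

lemma norm_pdC_one_aLam_le (γ ε1 ε2 : ℝ) {ξ : E3} (hξ : 0 < xih ξ) :
    ‖pdC 1 (aLam γ ε1 ε2) ξ‖ ≤ |ε1| * (1 + |ε2|) / 2 * (|γ| / xih ξ) := by
  rw [aLam_eq_phaseSum, pdC_phaseSum (differentiableAt_phaseSlope γ hξ)
    (differentiableAt_phaseSlope (-γ) hξ)]
  exact norm_phaseSum_le (abs_pd_one_phaseSlope_le γ hξ)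
    (abs_neg γ ▸ abs_pd_one_phaseSlope_le (-γ) hξ) ε1 ε2

lemma le_norm_aLam (γ ε1 : ℝ) {ε2 : ℝ} (hε2 : |ε2| = 1) {ξ : E3} (hξ : 0 < xih ξ) :
    |ε1| * |γ| ^ 3 * |ξ 1| * |ξ 2| / (1 + |γ| * ‖ξ‖) ^ 3 ≤ ‖aLam γ ε1 ε2 ξ‖ := by
  have hA := phaseRoot_pos γ hξ
  have hB := phaseRoot_pos (-γ) hξ
  have hinv : 4 * |γ| * |ξ 2| / (2 * (1 + |γ| * ‖ξ‖) ^ 3) ≤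
      |(phaseRoot γ ξ)⁻¹ + ε2 * (phaseRoot (-γ) ξ)⁻¹| := by
    calc 4 * |γ| * |ξ 2| / (2 * (1 + |γ| * ‖ξ‖) ^ 3)
        = |phaseRoot γ ξ ^ 2 - phaseRoot (-γ) ξ ^ 2| / (2 * (1 + |γ| * ‖ξ‖) ^ 3) := by
          rw [phaseRoot_sq_sub_phaseRoot_neg_sq, abs_mul, abs_mul, abs_of_pos (four_pos (α := ℝ))]
      _ ≤ |(phaseRoot γ ξ)⁻¹ - (phaseRoot (-γ) ξ)⁻¹| :=
          abs_sq_sub_sq_div_le_abs_inv_sub_inv hA hB (phaseRoot_le γ ξ)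
            (abs_neg γ ▸ phaseRoot_le (-γ) ξ)
      _ ≤ |(phaseRoot γ ξ)⁻¹ + ε2 * (phaseRoot (-γ) ξ)⁻¹| :=
          abs_sub_le_abs_add_mul (inv_nonneg.2 hA.le) (inv_nonneg.2 hB.le) hε2
  have hslope : phaseSlope γ ξ + ε2 * phaseSlope (-γ) ξ =
      γ ^ 2 * ξ 1 * ((phaseRoot γ ξ)⁻¹ + ε2 * (phaseRoot (-γ) ξ)⁻¹) := by
    rw [phaseSlope, phaseSlope]
    ring
  calc |ε1| * |γ| ^ 3 * |ξ 1| * |ξ 2| / (1 + |γ| * ‖ξ‖) ^ 3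
      = |ε1| / 2 * (|γ| ^ 2 * |ξ 1| * (4 * |γ| * |ξ 2| / (2 * (1 + |γ| * ‖ξ‖) ^ 3))) := by
        field_simp
        norm_num
    _ ≤ |ε1| / 2 * (|γ| ^ 2 * |ξ 1| *
          |(phaseRoot γ ξ)⁻¹ + ε2 * (phaseRoot (-γ) ξ)⁻¹|) := by gcongr
    _ = ‖aLam γ ε1 ε2 ξ‖ := by
      rw [aLam_eq_phaseSum, norm_phaseSum, hslope, abs_mul, abs_mul, abs_pow]

lemma le_norm_aLam_of_mem_CrR (γ ε1 : ℝ) {ε2 r R : ℝ} (hε2 : |ε2| = 1) (hr : 0 < r) (hR : 1 ≤ R)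
    {ξ : E3} (hξ : ξ ∈ CrR (r / 2) (2 * R)) :
    |ε1| * (|γ| ^ 3 / (2 * (1 + 2 * |γ|) ^ 3)) * R ^ (-(3 : ℝ)) * r * |ξ 1| ≤
      ‖aLam γ ε1 ε2 ξ‖ := by
  obtain ⟨hnorm, hhor, hvert⟩ := hξ
  have hR0 : 0 < R := one_pos.trans_le hR
  have hpow : R ^ (-(3 : ℝ)) = (R ^ 3)⁻¹ := by
    rw [Real.rpow_neg hR0.le]
    norm_cast
  have hden : 1 + |γ| * ‖ξ‖ ≤ (1 + 2 * |γ|) * R := by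
    calc 1 + |γ| * ‖ξ‖ ≤ R + |γ| * (2 * R) := by gcongr
      _ = (1 + 2 * |γ|) * R := by ring
  calc |ε1| * (|γ| ^ 3 / (2 * (1 + 2 * |γ|) ^ 3)) * R ^ (-(3 : ℝ)) * r * |ξ 1|
      = |ε1| * |γ| ^ 3 * |ξ 1| * (r / 2) / ((1 + 2 * |γ|) * R) ^ 3 := by
        rw [hpow]; field_simp
    _ ≤ |ε1| * |γ| ^ 3 * |ξ 1| * |ξ 2| / (1 + |γ| * ‖ξ‖) ^ 3 := by gcongr
    _ ≤ ‖aLam γ ε1 ε2 ξ‖ := le_norm_aLam γ ε1 hε2 ((half_pos hr).trans_le hhor)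

theorem aLam_bounds_general (γ : ℝ) (hγ : γ ≠ 0) :
    ∃ C1 C2 : ℝ, 0 < C1 ∧ 0 < C2 ∧
      ∀ r R : ℝ, 0 < r → r ≤ 1 → 1 ≤ R →
      ∀ ε1 ε2 : ℝ, (ε1 = 1 ∨ ε1 = -1) → (ε2 = 1 ∨ ε2 = -1) →
      ∀ ξ ∈ CrR (r / 2) (2 * R),
        fderiv ℝ (lamEV γ ε1 ε2) ξ (EuclideanSpace.single 1 1) = aLam γ ε1 ε2 ξ ∧
        C1 * R ^ (-(3 : ℝ)) * r * |ξ 1| ≤ ‖aLam γ ε1 ε2 ξ‖ ∧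
        ‖aLam γ ε1 ε2 ξ‖ ≤ C2 * r⁻¹ ∧
        ‖fderiv ℝ (aLam γ ε1 ε2) ξ (EuclideanSpace.single 1 1)‖ ≤ C2 * r⁻¹ := by
  have hγ' : 0 < |γ| := abs_pos.2 hγ
  refine ⟨|γ| ^ 3 / (2 * (1 + 2 * |γ|) ^ 3), 2 * |γ|, by positivity, by positivity, ?_⟩
  intro r R hr hr1 hR ε1 ε2 hε1 hε2 ξ hξ
  have hhor : 0 < xih ξ := (half_pos hr).trans_le hξ.2.1
  have hε1 : |ε1| = 1 := (abs_eq zero_le_one).2 hε1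
  have hε2 : |ε2| = 1 := (abs_eq zero_le_one).2 hε2
  have hε : |ε1| * (1 + |ε2|) / 2 = 1 := by norm_num [hε1, hε2]
  refine ⟨pdC_one_lamEV γ ε1 ε2 hhor, ?_, ?_, ?_⟩
  · simpa only [hε1, one_mul] using le_norm_aLam_of_mem_CrR γ ε1 hε2 hr hR hξ
  · calc ‖aLam γ ε1 ε2 ξ‖ ≤ |γ| := by simpa only [hε, one_mul] using norm_aLam_le γ ε1 ε2 ξ
      _ ≤ 2 * |γ| * 1 := by linarith
      _ ≤ 2 * |γ| * r⁻¹ := by gcongr; exact (one_le_inv₀ hr).2 hr1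
  · calc ‖pdC 1 (aLam γ ε1 ε2) ξ‖ ≤ |γ| / xih ξ := by
          simpa only [hε, one_mul] using norm_pdC_one_aLam_le γ ε1 ε2 hhor
      _ ≤ |γ| / (r / 2) := by gcongr; exact hξ.2.1
      _ = 2 * |γ| * r⁻¹ := by field_simp

/-- For `0 < r ≤ 1 ≤ R` there exist `C₁, C₂ > 0` depending only on `γ̄`
such that for each phase `λ = λ_{ε₁,ε₂}` and every `ξ ∈ C_{r/2,2R}`, the derivative
`a_λ(ξ) = ∂_{ξ₂}λ(ξ)` satisfies `C₁ R^{−3} r |ξ₂| ≤ |a_λ(ξ)| ≤ C₂ r^{−1}` and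
`|∂_{ξ₂} a_λ(ξ)| ≤ C₂ r^{−1}`. -/
theorem aLam_bounds (γ : ℝ) (hγ : 0 < γ) :
    ∃ C1 C2 : ℝ, 0 < C1 ∧ 0 < C2 ∧
      ∀ r R : ℝ, 0 < r → r ≤ 1 → 1 ≤ R →
      ∀ ε1 ε2 : ℝ, (ε1 = 1 ∨ ε1 = -1) → (ε2 = 1 ∨ ε2 = -1) →
      ∀ ξ ∈ CrR (r/2) (2*R),
        fderiv ℝ (lamEV γ ε1 ε2) ξ (EuclideanSpace.single 1 1) = aLam γ ε1 ε2 ξ ∧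
        C1 * R ^ (-(3:ℝ)) * r * |ξ 1| ≤ ‖aLam γ ε1 ε2 ξ‖ ∧
        ‖aLam γ ε1 ε2 ξ‖ ≤ C2 * r⁻¹ ∧
        ‖fderiv ℝ (aLam γ ε1 ε2) ξ (EuclideanSpace.single 1 1)‖ ≤ C2 * r⁻¹ :=
  aLam_bounds_general γ hγ.ne'
end
end
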